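/- Let g ≥ 1, n ≥ 3, and let A = (α₁,…,αₙ) be a unit fraction partition of g with α₁ ≤ ⋯ ≤ αₙ; set F_{n−1}(A) = (α₁⋯αₙ)/lcm(α₁,…,αₙ). If (n,g) = (3,1), then F_{n−1}(A) ≤ 9 with equality if and only if A = (3,3,3). In all other cases F_{n−1}(A) ≤ 2·t_{g,n−1}²/g, with equality if and only if A is one of (6,6,6), (2,6,6,6), or (s_{g,1}, …, s_{g,n−2}, 2t_{g,n−1}, 2t_{g,n−1}). -/

import Mathlib

open Finset

/-- The `g`-Sylvester sequence: `s_{g,1} = g+1`, `s_{g,k+1} = s_{g,k}(s_{g,k}-1)+1`.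
(The value at `0` is junk and never used.) -/
def sylv (g : ℕ) : ℕ → ℕ
  | 0 => 0
  | 1 => g + 1
  | k + 2 => sylv g (k + 1) * (sylv g (k + 1) - 1) + 1

/-- The truncated `g`-Sylvester sequence `t_{g,k} = s_{g,k} - 1`. -/
def tsylv (g k : ℕ) : ℕ := sylv g k - 1

/-- `A` is a unit fraction partition of `g`: a tuple of positive integers with
`1/g = ∑ 1/αᵢ`. -/
def IsUFP {n : ℕ} (g : ℕ) (A : Fin n → ℕ) : Prop :=
  (∀ i, 0 < A i) ∧ (1 : ℚ) / (g : ℚ) = ∑ i, (1 : ℚ) / (A i : ℚ)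

/-!
Write the partition as `a₀ ≤ ⋯ ≤ a_{k+1}` and let `r_j = 1/g - ∑_{i<j} 1/aᵢ`. Since the least common
multiple is at least the last term, `F_{n-1}(A) ≤ a₀ ⋯ a_k`, with equality as soon as all terms
divide the last one.

The greedy choice is optimal: `r_m ≥ 1/t_{g,m+1}`. Otherwise take a minimal counterexample. Abel
summation, `aᵢ` being increasing, turns `r_l ≥ 1/t_{g,l+1}` for `l < m` into
`∑_{i<m} aᵢ(1/s_{g,i+1} - 1/aᵢ) ≤ a_{m-1}(r_m - 1/t_{g,m+1})`, and `log u ≤ u - 1` applied to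
`u = aᵢ/s_{g,i+1}` gives `∏_{i<m} aᵢ < ∏_{i<m} s_{g,i+1}`; hence the positive integer
`g·a₀⋯a_{m-1}·r_m` would be less than `1`.

Choose `j + e = k` so that `aᵢ r_j ≤ e + 1` for `i < j`, while the last `e + 2` terms satisfy
`r_j^{e+1} ∏_{j≤i≤k} aᵢ ≤ (e+2)^{e+1}`: extend the tail downwards from the last two terms until
`a_{j-1} r_j ≤ e + 1`. As long as this fails, `v = a_{j-1} r_{j-1}` lies in `[e + 2, e + 3]`, where
`v^{e+2} / (v - 1)^{e+1}` increases, and the tail inequality propagates. The same logarithmic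
estimate bounds `g ∏_{i<j} aᵢ` by `t (r_j t)^{e+1}` with `t = t_{g,j+1}`, so
`g·a₀⋯a_k ≤ (e+2)^{e+1} t_{g,j+1}^{e+2}`, with equality only for the tuple
`(s_{g,1}, …, s_{g,j}, (e+2)t_{g,j+1}, …, (e+2)t_{g,j+1})`.

For `j + e = k` fixed, these values increase with `j` up to `2 t_{g,k+1}²` at `e = 0`. The
exceptions are `e = 1` with `t_{g,j+1} = 1`, where the value drops from `9` to `8` and which is
`(n, g) = (3, 1)`, and `e = 1` with `t_{g,j+1} = 2`, where two values tie and which gives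
`(6,6,6)` and `(2,6,6,6)`.
-/

lemma sylv_succ (g i : ℕ) : sylv g (i + 1) = tsylv g (i + 1) + 1 := by
  cases i <;> simp [sylv, tsylv]

lemma tsylv_one (g : ℕ) : tsylv g 1 = g := by
  simp [tsylv, sylv]

lemma tsylv_succ_succ (g i : ℕ) : tsylv g (i + 2) = tsylv g (i + 1) * sylv g (i + 1) := by
  rw [mul_comm]
  rfl

lemma add_le_tsylv_succ {g : ℕ} (hg : 1 ≤ g) (i : ℕ) : g + i ≤ tsylv g (i + 1) := by
  induction i with
  | zero => rw [tsylv_one, add_zero]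
  | succ i ih =>
    rw [tsylv_succ_succ, sylv_succ]
    nlinarith

lemma tsylv_succ_pos {g : ℕ} (hg : 1 ≤ g) (i : ℕ) : 0 < tsylv g (i + 1) := by
  have := add_le_tsylv_succ hg i
  omega

lemma mul_prod_sylv (g m : ℕ) : g * ∏ i ∈ range m, sylv g (i + 1) = tsylv g (m + 1) := by
  induction m with
  | zero => rw [range_zero, prod_empty, mul_one, tsylv_one]
  | succ m ih => rw [prod_range_succ, ← mul_assoc, ih, tsylv_succ_succ]

lemma sylv_succ_dvd_tsylv_succ (g : ℕ) {i m : ℕ} (h : i < m) :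
    sylv g (i + 1) ∣ tsylv g (m + 1) := by
  rw [← mul_prod_sylv]
  exact (dvd_prod_of_mem (fun i => sylv g (i + 1)) (mem_range.mpr h)).mul_left g

/-- What is left of `1/g` after subtracting the first `m` unit fractions `1/a₀, …, 1/aₘ₋₁`. -/
noncomputable def remainder (g : ℕ) (a : ℕ → ℕ) (m : ℕ) : ℝ :=
  (g : ℝ)⁻¹ - ∑ i ∈ range m, (a i : ℝ)⁻¹

lemma remainder_sylv {g : ℕ} (hg : 1 ≤ g) (m : ℕ) :
    remainder g (fun i => sylv g (i + 1)) m = (tsylv g (m + 1) : ℝ)⁻¹ := by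
  induction m with
  | zero => simp [remainder, tsylv_one]
  | succ m ih =>
    have ht : (0 : ℝ) < tsylv g (m + 1) := by exact_mod_cast tsylv_succ_pos hg m
    rw [remainder, sum_range_succ, ← sub_sub, ← remainder, ih, tsylv_succ_succ, sylv_succ]
    push_cast
    field_simp
    ring

lemma remainder_congr {g m : ℕ} {a b : ℕ → ℕ} (h : ∀ i < m, a i = b i) :
    remainder g a m = remainder g b m := by
  rw [remainder, remainder, sum_congr rfl fun i hi => by rw [h i (mem_range.mp hi)]]

lemma remainder_antitone (g : ℕ) (a : ℕ → ℕ) : Antitone (remainder g a) :=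
  antitone_nat_of_succ_le fun m => by
    rw [remainder, remainder, sum_range_succ]
    have : (0 : ℝ) ≤ (a m : ℝ)⁻¹ := by positivity
    linarith

lemma exists_nat_eq_prod_mul_sum_inv {ι : Type*} (s : Finset ι) {a : ι → ℕ}
    (ha : ∀ i, 0 < a i) : ∃ z : ℕ, (∏ i ∈ s, (a i : ℝ)) * ∑ i ∈ s, (a i : ℝ)⁻¹ = z := by
  classical
  refine ⟨∑ i ∈ s, ∏ j ∈ s.erase i, a j, ?_⟩
  push_cast
  rw [mul_sum]
  refine sum_congr rfl fun i hi => ?_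
  have : (a i : ℝ) ≠ 0 := by exact_mod_cast (ha i).ne'
  rw [← mul_prod_erase s _ hi]
  field_simp

lemma one_le_mul_prod_mul_remainder {g m : ℕ} (hg : 1 ≤ g) {a : ℕ → ℕ} (ha : ∀ i, 0 < a i)
    (h : 0 < remainder g a m) : 1 ≤ (g * ∏ i ∈ range m, (a i : ℝ)) * remainder g a m := by
  obtain ⟨z, hz⟩ := exists_nat_eq_prod_mul_sum_inv (range m) ha
  have hprod : 0 < ∏ i ∈ range m, (a i : ℝ) := prod_pos fun i _ => by exact_mod_cast ha i
  have hint : (g * ∏ i ∈ range m, (a i : ℝ)) * remainder g a m =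
      (((∏ i ∈ range m, a i : ℕ) - g * z : ℤ) : ℝ) := by
    push_cast
    rw [← hz, remainder]
    field_simp
  have hpos : 0 < (g * ∏ i ∈ range m, (a i : ℝ)) * remainder g a m := by positivity
  rw [hint] at hpos ⊢
  exact_mod_cast hpos

lemma sum_mul_le_mul_sum_of_monotone {a v : ℕ → ℝ} (ha : Monotone a) {m : ℕ}
    (hv : ∀ l ≤ m, 0 ≤ ∑ i ∈ range l, v i) :
    ∑ i ∈ range (m + 1), a i * v i ≤ a m * ∑ i ∈ range (m + 1), v i := by
  induction m with
  | zero => simp only [zero_add, range_one, sum_singleton, le_refl]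
  | succ m ih =>
    calc ∑ i ∈ range (m + 1 + 1), a i * v i
        = ∑ i ∈ range (m + 1), a i * v i + a (m + 1) * v (m + 1) := sum_range_succ ..
      _ ≤ a m * ∑ i ∈ range (m + 1), v i + a (m + 1) * v (m + 1) := by
        gcongr
        exact ih fun l hl => hv l (by omega)
      _ ≤ a (m + 1) * ∑ i ∈ range (m + 1), v i + a (m + 1) * v (m + 1) := by
        gcongr
        · exact hv _ le_rfl
        · exact ha m.le_succ
      _ = a (m + 1) * ∑ i ∈ range (m + 1 + 1), v i := by rw [sum_range_succ _ (m + 1), mul_add]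

lemma prod_lt_prod_mul_exp_sum {ι : Type*} {s : Finset ι} {a b : ι → ℝ} (ha : ∀ i, 0 < a i)
    (hb : ∀ i, 0 < b i) (hne : ∃ i ∈ s, a i ≠ b i) :
    ∏ i ∈ s, a i < (∏ i ∈ s, b i) * Real.exp (∑ i ∈ s, a i * ((b i)⁻¹ - (a i)⁻¹)) := by
  have hexp (i : ι) : a i * ((b i)⁻¹ - (a i)⁻¹) = a i / b i - 1 := by
    have := (ha i).ne'
    field_simp
  have hdiv (i : ι) : a i = b i * (a i / b i) := (mul_div_cancel₀ _ (hb i).ne').symm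
  rw [Real.exp_sum, ← prod_mul_distrib]
  refine prod_lt_prod (fun i _ => ha i) (fun i _ => ?_) ?_
  · rw [hexp]
    nth_rw 1 [hdiv i]
    gcongr
    · exact (hb i).le
    · linarith [Real.add_one_le_exp (a i / b i - 1)]
  · obtain ⟨i, hi, hab⟩ := hne
    have hab' : a i / b i - 1 ≠ 0 := by rwa [sub_ne_zero, Ne, div_eq_one_iff_eq (hb i).ne']
    refine ⟨i, hi, ?_⟩
    rw [hexp]
    nth_rw 1 [hdiv i]
    gcongr
    · exact hb i
    · linarith [Real.add_one_lt_exp hab']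

lemma prod_lt_prod_sylv_mul_exp {g m : ℕ} (hg : 1 ≤ g) {a : ℕ → ℕ} (ha : ∀ i, 0 < a i)
    (hmono : Monotone a) (hpre : ∀ l ≤ m, (tsylv g (l + 1) : ℝ)⁻¹ ≤ remainder g a l)
    (hne : ∃ i < m + 1, a i ≠ sylv g (i + 1)) :
    ∏ i ∈ range (m + 1), (a i : ℝ) < (∏ i ∈ range (m + 1), (sylv g (i + 1) : ℝ)) *
      Real.exp (a m * (remainder g a (m + 1) - (tsylv g (m + 2) : ℝ)⁻¹)) := by
  have hgap (l : ℕ) : ∑ i ∈ range l, ((sylv g (i + 1) : ℝ)⁻¹ - (a i : ℝ)⁻¹) =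
      remainder g a l - (tsylv g (l + 1) : ℝ)⁻¹ := by
    rw [← remainder_sylv hg, remainder, remainder, sum_sub_distrib]
    ring
  have hs (i : ℕ) : (0 : ℝ) < sylv g (i + 1) := by
    rw [sylv_succ]
    positivity
  refine (prod_lt_prod_mul_exp_sum (fun i => by exact_mod_cast ha i) hs ?_).trans_le ?_
  · obtain ⟨i, hi, h⟩ := hne
    exact ⟨i, mem_range.mpr hi, by exact_mod_cast h⟩
  · rw [← hgap]
    gcongr
    exact sum_mul_le_mul_sum_of_monotone (Nat.mono_cast.comp hmono) fun l hl => by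
      rw [hgap]
      linarith [hpre l hl]

lemma inv_tsylv_le_remainder {g m : ℕ} (hg : 1 ≤ g) {a : ℕ → ℕ} (ha : ∀ i, 0 < a i)
    (hmono : Monotone a) (h : 0 < remainder g a m) :
    (tsylv g (m + 1) : ℝ)⁻¹ ≤ remainder g a m := by
  induction m using Nat.strong_induction_on with
  | _ m ih =>
  by_cases hne : ∃ i < m, a i ≠ sylv g (i + 1)
  · obtain ⟨m, rfl⟩ : ∃ m', m = m' + 1 := Nat.exists_eq_succ_of_ne_zero (by grind)
    by_contra! hlt
    have hpre (l) (hl : l ≤ m) : (tsylv g (l + 1) : ℝ)⁻¹ ≤ remainder g a l :=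
      ih l (by omega) (h.trans_le (remainder_antitone g a (by omega)))
    have hexp : Real.exp (a m * (remainder g a (m + 1) - (tsylv g (m + 2) : ℝ)⁻¹)) ≤ 1 :=
      Real.exp_le_one_iff.mpr (mul_nonpos_of_nonneg_of_nonpos (a m).cast_nonneg (by linarith))
    have hprod : ∏ i ∈ range (m + 1), (a i : ℝ) < ∏ i ∈ range (m + 1), (sylv g (i + 1) : ℝ) :=
      (prod_lt_prod_sylv_mul_exp hg ha hmono hpre hne).trans_le
        (mul_le_of_le_one_right (prod_nonneg fun i _ => Nat.cast_nonneg _) hexp)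
    have ht : (0 : ℝ) < tsylv g (m + 2) := by exact_mod_cast tsylv_succ_pos hg (m + 1)
    have hlt_one : (g * ∏ i ∈ range (m + 1), (a i : ℝ)) * remainder g a (m + 1) < 1 := by
      calc (g * ∏ i ∈ range (m + 1), (a i : ℝ)) * remainder g a (m + 1)
          < (g * ∏ i ∈ range (m + 1), (sylv g (i + 1) : ℝ)) * (tsylv g (m + 2) : ℝ)⁻¹ := by
            gcongr
        _ = tsylv g (m + 2) * (tsylv g (m + 2) : ℝ)⁻¹ := by
            rw [← mul_prod_sylv g (m + 1)]
            push_cast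
            rfl
        _ = 1 := mul_inv_cancel₀ ht.ne'
    exact hlt_one.not_ge (one_le_mul_prod_mul_remainder hg ha h)
  · push Not at hne
    rw [remainder_congr hne, remainder_sylv hg]

lemma prod_lt_prod_sylv_mul_pow {g j d : ℕ} (hg : 1 ≤ g) {a : ℕ → ℕ} (ha : ∀ i, 0 < a i)
    (hmono : Monotone a) (hrem : 0 < remainder g a j) (hd : ∀ i < j, a i * remainder g a j ≤ d)
    (hne : ∃ i < j, a i ≠ sylv g (i + 1)) :
    ∏ i ∈ range j, (a i : ℝ) <
      (∏ i ∈ range j, (sylv g (i + 1) : ℝ)) * (remainder g a j * tsylv g (j + 1)) ^ d := by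
  obtain ⟨j, rfl⟩ : ∃ j', j = j' + 1 := Nat.exists_eq_succ_of_ne_zero (by grind)
  have hle (l) (hl : l ≤ j + 1) : (tsylv g (l + 1) : ℝ)⁻¹ ≤ remainder g a l :=
    inv_tsylv_le_remainder hg ha hmono (hrem.trans_le (remainder_antitone g a hl))
  have hlast := hle (j + 1) le_rfl
  set r := remainder g a (j + 1)
  set t := (tsylv g (j + 1 + 1) : ℝ)
  have ht : 0 < t := Nat.cast_pos.mpr (tsylv_succ_pos hg (j + 1))
  have hexponent : a j * (r - t⁻¹) ≤ d * Real.log (r * t) := by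
    calc a j * (r - t⁻¹) = a j * r * (1 - (r * t)⁻¹) := by field_simp
      _ ≤ d * (1 - (r * t)⁻¹) := by
        gcongr
        · rw [sub_nonneg]
          exact inv_le_one_of_one_le₀ ((inv_le_iff_one_le_mul₀ ht).mp hlast)
        · exact hd j j.lt_succ_self
      _ ≤ d * Real.log (r * t) := by
        gcongr
        exact Real.one_sub_inv_le_log_of_pos (by positivity)
  refine (prod_lt_prod_sylv_mul_exp hg ha hmono (fun l hl => hle l (by omega)) hne).trans_le ?_
  rw [← Real.exp_log (show 0 < r * t by positivity), ← Real.exp_nat_mul]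
  gcongr

lemma one_add_mul_add_mul_sq_le_pow {x : ℝ} (hx : 0 ≤ x) (n : ℕ) :
    1 + n * x + n * (n - 1) / 2 * x ^ 2 ≤ (1 + x) ^ n := by
  induction n with
  | zero => norm_num
  | succ n ih =>
    have hcube : (0 : ℝ) ≤ n * (n - 1) / 2 * x ^ 3 := by
      rcases n with _ | n
      · norm_num
      · push_cast
        rw [add_sub_cancel_right]
        positivity
    calc 1 + ((n + 1 : ℕ) : ℝ) * x + ((n + 1 : ℕ) : ℝ) * ((n + 1 : ℕ) - 1) / 2 * x ^ 2
        ≤ (1 + n * x + n * (n - 1) / 2 * x ^ 2) * (1 + x) := by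
          push_cast
          linarith
      _ ≤ (1 + x) ^ n * (1 + x) := by gcongr
      _ = (1 + x) ^ (n + 1) := (pow_succ ..).symm

-- The denominators of `v ^ (e + 1) / (v - 1) ^ e` are cleared because `v = 1` occurs for `e = 0`.
lemma pow_mul_pow_pred_lt {e : ℕ} {v : ℝ} (hv : e + 1 ≤ v) (hv' : v < e + 2) :
    v ^ (e + 1) * (e + 1) ^ e < (e + 2) ^ (e + 1) * (v - 1) ^ e := by
  have hv0 : 0 < v := by linarith
  set x : ℝ := (v - (e + 2)) / (v * (e + 1)) with hx
  have hx1 : 1 + x = (e + 2) * (v - 1) / (v * (e + 1)) := by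
    rw [hx]
    field_simp
    ring
  have hbernoulli : 1 + e * x ≤ (1 + x) ^ e := by
    refine one_add_mul_le_pow ?_ e
    have : 0 ≤ 1 + x := by
      rw [hx1]
      exact div_nonneg (mul_nonneg (by positivity) (by linarith)) (by positivity)
    linarith
  have hlin : v < (e + 2) * (1 + e * x) := by
    have hgap : (e + 2) * (1 + e * x) - v =
        (e + 2 - v) * (v * (e + 1) - e * (e + 2)) / (v * (e + 1)) := by
      rw [hx]
      field_simp
      ring
    have : 0 < (e + 2) * (1 + e * x) - v := by
      rw [hgap]
      exact div_pos (mul_pos (by linarith) (by nlinarith)) (by positivity)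
    linarith
  calc v ^ (e + 1) * (e + 1) ^ e = v * (v * (e + 1)) ^ e := by rw [mul_pow]; ring
    _ < (e + 2) * (1 + e * x) * (v * (e + 1)) ^ e := by gcongr
    _ ≤ (e + 2) * (1 + x) ^ e * (v * (e + 1)) ^ e := by gcongr
    _ = (e + 2) * ((1 + x) * (v * (e + 1))) ^ e := by rw [mul_pow (1 + x), mul_assoc]
    _ = (e + 2) ^ (e + 1) * (v - 1) ^ e := by
      rw [hx1, div_mul_cancel₀ _ (by positivity), mul_pow]
      ring

/-- The product of the first `d` terms of `b` is at most what it would be if the first `d + 1`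
terms were all equal, with the same sum of reciprocals; equality forces that case.
For `d ≥ 2` this fails if `b 1` is much larger than `b 0`. -/
def HarmonicProdBound (b : ℕ → ℝ) (d : ℕ) : Prop :=
  (∏ i ∈ range d, b i) * (∑ i ∈ range (d + 1), (b i)⁻¹) ^ d ≤ (d + 1) ^ d ∧
    ((∏ i ∈ range d, b i) * (∑ i ∈ range (d + 1), (b i)⁻¹) ^ d = (d + 1) ^ d →
      ∀ i ≤ d, b i * ∑ i ∈ range (d + 1), (b i)⁻¹ = d + 1)

lemma harmonicProdBound_zero {b : ℕ → ℝ} (hb : 0 < b 0) : HarmonicProdBound b 0 := by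
  simp [HarmonicProdBound, hb.ne']

lemma mul_sum_inv_le_of_monotone {b : ℕ → ℝ} (hb : ∀ i, 0 < b i) (hmono : Monotone b) (d : ℕ) :
    b 0 * ∑ i ∈ range d, (b i)⁻¹ ≤ d := by
  calc b 0 * ∑ i ∈ range d, (b i)⁻¹ ≤ b 0 * ∑ _i ∈ range d, (b 0)⁻¹ := by
        gcongr with i
        · exact (hb 0).le
        · exact hb 0
        · exact hmono i.zero_le
    _ = d := by
        have := (hb 0).ne'
        rw [sum_const, card_range, nsmul_eq_mul]
        field_simp

lemma HarmonicProdBound.succ {b : ℕ → ℝ} (hb : ∀ i, 0 < b i) (hmono : Monotone b) {d : ℕ}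
    (h : HarmonicProdBound (fun i => b (i + 1)) d)
    (hlt : d < b 0 * ∑ i ∈ range (d + 1), (b (i + 1))⁻¹) : HarmonicProdBound b (d + 1) := by
  obtain ⟨hle, heq⟩ := h
  have hv' := mul_sum_inv_le_of_monotone hb hmono (d + 2)
  have hb0 := hb 0
  rw [sum_range_succ'] at hv'
  rw [HarmonicProdBound, prod_range_succ', sum_range_succ' _ (d + 1)]
  dsimp only at hle heq
  set r' := ∑ i ∈ range (d + 1), (b (i + 1))⁻¹
  set P := ∏ i ∈ range d, b (i + 1)
  set r := r' + (b 0)⁻¹ with hr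
  have hr' : 0 < r' := sum_pos (fun i _ => inv_pos.mpr (hb _)) nonempty_range_add_one
  set v := b 0 * r with hv
  have hvsub : v - 1 = b 0 * r' := by
    rw [hv, hr]
    field_simp
    ring
  have hscale : P * b 0 * r ^ (d + 1) * (v - 1) ^ d = v ^ (d + 1) * (P * r' ^ d) := by
    rw [hvsub, hv, mul_pow, mul_pow]
    ring
  have hcast : ((d + 1 : ℕ) : ℝ) + 1 = d + 2 := by push_cast; ring
  have hvpos : 0 < (v - 1) ^ d := by rw [hvsub]; positivity
  rw [hcast, ← mul_le_mul_iff_left₀ hvpos, ← mul_left_inj' hvpos.ne', hscale]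
  rcases (show v ≤ d + 2 by exact_mod_cast hv').lt_or_eq with hv2 | hv2
  · have hstrict : v ^ (d + 1) * (P * r' ^ d) < (d + 2) ^ (d + 1) * (v - 1) ^ d :=
      (mul_le_mul_of_nonneg_left hle (by positivity)).trans_lt
        (pow_mul_pow_pred_lt (by linarith) hv2)
    exact ⟨hstrict.le, fun h => absurd h hstrict.ne⟩
  · have hv1 : v - 1 = d + 1 := by linarith
    rw [hv1, hv2, mul_le_mul_iff_right₀ (by positivity), mul_right_inj' (by positivity)]
    refine ⟨hle, fun h i hi => ?_⟩
    rcases i with _ | i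
    · exact hv2
    · have : b (i + 1) = b 0 := mul_right_cancel₀ hr'.ne' <| by
        rw [heq h i (by omega), ← hvsub, hv1]
      rw [this, ← hv2]

lemma exists_harmonicProdBound {b : ℕ → ℝ} (hb : ∀ i, 0 < b i) (hmono : Monotone b) (k : ℕ) :
    ∃ j e, j + e = k ∧ (∀ i < j, b i * ∑ l ∈ range (e + 2), (b (j + l))⁻¹ ≤ e + 1) ∧
      HarmonicProdBound (fun l => b (j + l)) (e + 1) := by
  induction k generalizing b with
  | zero =>
    refine ⟨0, 0, rfl, by simp, ?_⟩
    simp only [zero_add]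
    refine (harmonicProdBound_zero (hb 1)).succ hb hmono ?_
    have := hb 0
    have := hb 1
    simp only [CharP.cast_eq_zero, zero_add, range_one, sum_singleton]
    positivity
  | succ k ih =>
    obtain ⟨j, e, rfl, hle, hbound⟩ := ih (fun i => hb (i + 1))
      (hmono.comp (fun _ _ h => Nat.add_le_add_right h 1))
    simp only [Nat.add_right_comm j _ 1] at hle hbound
    by_cases hsplit : b 0 * ∑ l ∈ range (e + 2), (b (j + 1 + l))⁻¹ ≤ e + 1
    · refine ⟨j + 1, e, by ring, fun i hi => ?_, hbound⟩
      rcases i with _ | i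
      · exact hsplit
      · exact hle i (by omega)
    · obtain rfl : j = 0 := by
        by_contra hj
        refine hsplit (le_trans ?_ (hle 0 (by omega)))
        gcongr
        · exact sum_nonneg fun l _ => inv_nonneg.mpr (hb _).le
        · exact hmono (Nat.zero_le _)
      simp only [zero_add, add_comm 1] at hbound hsplit ⊢
      refine ⟨0, e + 1, by ring, by simp, ?_⟩
      simp only [zero_add]
      exact hbound.succ hb hmono (by push_cast; exact not_le.mp hsplit)

lemma prod_le_prod_sylv_mul_pow {g j d : ℕ} (hg : 1 ≤ g) {a : ℕ → ℕ} (ha : ∀ i, 0 < a i)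
    (hmono : Monotone a) (hrem : 0 < remainder g a j)
    (hd : ∀ i < j, a i * remainder g a j ≤ d) :
    g * ∏ i ∈ range j, (a i : ℝ) ≤
        tsylv g (j + 1) * (remainder g a j * tsylv g (j + 1)) ^ d ∧
      (g * ∏ i ∈ range j, (a i : ℝ) =
          tsylv g (j + 1) * (remainder g a j * tsylv g (j + 1)) ^ d →
        ∀ i < j, a i = sylv g (i + 1)) := by
  have hsylv : (g : ℝ) * ∏ i ∈ range j, (sylv g (i + 1) : ℝ) = tsylv g (j + 1) := by
    exact_mod_cast mul_prod_sylv g j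
  by_cases hne : ∃ i < j, a i ≠ sylv g (i + 1)
  · have hg' : (0 : ℝ) < g := by exact_mod_cast hg
    have hlt := mul_lt_mul_of_pos_left (prod_lt_prod_sylv_mul_pow hg ha hmono hrem hd hne) hg'
    rw [← mul_assoc, hsylv] at hlt
    exact ⟨hlt.le, fun heq => absurd heq hlt.ne⟩
  · push Not at hne
    have ht : (tsylv g (j + 1) : ℝ) ≠ 0 := by exact_mod_cast (tsylv_succ_pos hg j).ne'
    rw [remainder_congr hne, remainder_sylv hg, inv_mul_cancel₀ ht, one_pow, mul_one, ← hsylv,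
      prod_congr rfl fun i hi => by rw [hne i (mem_range.mp hi)]]
    exact ⟨le_rfl, fun _ => hne⟩

/-- The tuple `(s_{g,1}, …, s_{g,j}, m·t_{g,j+1}, m·t_{g,j+1}, …)`, indexed from `0`. Its first
`j + m` terms form a unit fraction partition of `g`. -/
def sylvTuple (g j m i : ℕ) : ℕ :=
  if i < j then sylv g (i + 1) else m * tsylv g (j + 1)

lemma eq_sylvTuple {g j d m i : ℕ} (hg : 1 ≤ g) {a : ℕ → ℕ}
    (hhead : ∀ i < j, a i = sylv g (i + 1)) (htail : ∀ l ≤ d, a (j + l) * remainder g a j = m)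
    (hi : i ≤ j + d) : a i = sylvTuple g j m i := by
  rw [sylvTuple]
  split_ifs with hij
  · exact hhead i hij
  · obtain ⟨l, rfl⟩ := Nat.exists_eq_add_of_le (not_lt.mp hij)
    have ht : (tsylv g (j + 1) : ℝ) ≠ 0 := by exact_mod_cast (tsylv_succ_pos hg j).ne'
    have hl := htail l (by omega)
    rw [remainder_congr hhead, remainder_sylv hg, mul_inv_eq_iff_eq_mul₀ ht] at hl
    exact_mod_cast hl

lemma mul_prod_sylvTuple (g j m d : ℕ) :
    g * ∏ i ∈ range (j + d), sylvTuple g j m i = m ^ d * tsylv g (j + 1) ^ (d + 1) := by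
  have hhead : ∏ i ∈ range j, sylvTuple g j m i = ∏ i ∈ range j, sylv g (i + 1) :=
    prod_congr rfl fun i hi => if_pos (mem_range.mp hi)
  have htail (l : ℕ) : sylvTuple g j m (j + l) = m * tsylv g (j + 1) := if_neg (by omega)
  rw [prod_range_add, ← mul_assoc, hhead, mul_prod_sylv]
  simp only [htail, prod_const, card_range]
  ring

lemma sylvTuple_dvd (g j m i : ℕ) : sylvTuple g j m i ∣ m * tsylv g (j + 1) := by
  rw [sylvTuple]
  split_ifs with h
  · exact (sylv_succ_dvd_tsylv_succ g h).mul_left m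
  · exact dvd_rfl

lemma mul_prod_le_of_harmonicProdBound {g j e : ℕ} (hg : 1 ≤ g) {a : ℕ → ℕ} (ha : ∀ i, 0 < a i)
    (hmono : Monotone a) (hrem : ∑ l ∈ range (e + 2), (a (j + l) : ℝ)⁻¹ = remainder g a j)
    (hsplit : ∀ i < j, a i * remainder g a j ≤ (e + 1 : ℕ))
    (htail : HarmonicProdBound (fun l => (a (j + l) : ℝ)) (e + 1)) :
    g * ∏ i ∈ range (j + e + 1), a i ≤ (e + 2) ^ (e + 1) * tsylv g (j + 1) ^ (e + 2) ∧
      (g * ∏ i ∈ range (j + e + 1), a i = (e + 2) ^ (e + 1) * tsylv g (j + 1) ^ (e + 2) →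
        ∀ i < j + e + 2, a i = sylvTuple g j (e + 2) i) := by
  have ha' (i : ℕ) : (0 : ℝ) < a i := by exact_mod_cast ha i
  have hrem_pos : 0 < remainder g a j := by
    rw [← hrem]
    exact sum_pos (fun l _ => inv_pos.mpr (ha' _)) nonempty_range_add_one
  obtain ⟨hhead, hhead_eq⟩ := prod_le_prod_sylv_mul_pow hg ha hmono hrem_pos hsplit
  rw [HarmonicProdBound, hrem, show ((e + 1 : ℕ) : ℝ) + 1 = e + 2 by push_cast; ring] at htail
  obtain ⟨htail, htail_eq⟩ := htail
  have ht : (0 : ℝ) < tsylv g (j + 1) := by exact_mod_cast tsylv_succ_pos hg j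
  have hP : 0 < ∏ l ∈ range (e + 1), (a (j + l) : ℝ) := prod_pos fun l _ => ha' _
  have hprod : ((g * ∏ i ∈ range (j + e + 1), a i : ℕ) : ℝ) =
      (g * ∏ i ∈ range j, (a i : ℝ)) * ∏ l ∈ range (e + 1), (a (j + l) : ℝ) := by
    rw [add_assoc, prod_range_add]
    push_cast
    rw [mul_assoc]
  rw [← Nat.cast_le (α := ℝ), ← Nat.cast_inj (R := ℝ), hprod]
  push_cast
  have hle₁ := mul_le_mul_of_nonneg_right hhead hP.le
  have hle₂ := mul_le_mul_of_nonneg_right htail (pow_pos ht (e + 2)).le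
  have hmid (P R t : ℝ) : t * (R * t) ^ (e + 1) * P = P * R ^ (e + 1) * t ^ (e + 2) := by ring
  rw [hmid] at hle₁
  refine ⟨hle₁.trans hle₂, fun heq => ?_⟩
  have hhead_sylv := hhead_eq <| mul_right_cancel₀ hP.ne' <| by
    rw [hmid]
    exact hle₁.antisymm (hle₂.trans heq.ge)
  have htail_const := htail_eq <| mul_right_cancel₀ (pow_pos ht (e + 2)).ne' <|
    hle₂.antisymm (heq.symm.trans_le hle₁)
  exact fun i hi => eq_sylvTuple (d := e + 1) (m := e + 2) hg hhead_sylv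
    (by exact_mod_cast htail_const) (by omega)

lemma exists_mul_prod_le {g k : ℕ} (hg : 1 ≤ g) {a : ℕ → ℕ} (ha : ∀ i, 0 < a i)
    (hmono : Monotone a) (hsum : ∑ i ∈ range (k + 2), (a i : ℝ)⁻¹ = (g : ℝ)⁻¹) :
    ∃ j e, j + e = k ∧
      g * ∏ i ∈ range (k + 1), a i ≤ (e + 2) ^ (e + 1) * tsylv g (j + 1) ^ (e + 2) ∧
      (g * ∏ i ∈ range (k + 1), a i = (e + 2) ^ (e + 1) * tsylv g (j + 1) ^ (e + 2) →
        ∀ i < k + 2, a i = sylvTuple g j (e + 2) i) := by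
  obtain ⟨j, e, rfl, hsplit, htail⟩ :=
    exists_harmonicProdBound (fun i => Nat.cast_pos.mpr (ha i)) (Nat.mono_cast.comp hmono) k
  have hrem : ∑ l ∈ range (e + 2), (a (j + l) : ℝ)⁻¹ = remainder g a j := by
    rw [remainder, ← hsum, add_assoc, sum_range_add _ j, add_sub_cancel_left]
  rw [hrem] at hsplit
  exact ⟨j, e, rfl,
    mul_prod_le_of_harmonicProdBound hg ha hmono hrem (by exact_mod_cast hsplit) htail⟩

lemma add_two_pow_mul_lt {d t : ℕ} (hd : 2 ≤ d) (ht : 1 ≤ t) :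
    (d + 2) ^ (d + 1) * t < (d + 1) ^ d * (t + 1) ^ (d + 1) := by
  suffices h : ((d : ℝ) + 2) ^ (d + 1) * (t * (d + 1)) < ((d + 1) * (t + 1)) ^ (d + 1) by
    have h' : (d + 2) ^ (d + 1) * (t * (d + 1)) < ((d + 1) * (t + 1)) ^ (d + 1) := by
      exact_mod_cast h
    refine lt_of_mul_lt_mul_right (a := d + 1) ?_ (Nat.zero_le _)
    calc (d + 2) ^ (d + 1) * t * (d + 1) = (d + 2) ^ (d + 1) * (t * (d + 1)) := mul_assoc ..
      _ < ((d + 1) * (t + 1)) ^ (d + 1) := h'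
      _ = (d + 1) ^ d * (t + 1) ^ (d + 1) * (d + 1) := by
        rw [mul_pow]
        ring
  have hd' : (2 : ℝ) ≤ d := by exact_mod_cast hd
  have ht' : (1 : ℝ) ≤ t := by exact_mod_cast ht
  set x : ℝ := (t * (d + 1) - 1) / (d + 2) with hx
  have hxt : x * (d + 2) = t * (d + 1) - 1 := div_mul_cancel₀ _ (by positivity)
  have hquad : 1 < ((d : ℝ) + 1) * d / 2 * x := by
    have hd1 : (d : ℝ) + 1 ≤ (d + 1) * d / 2 := by nlinarith
    have htd : 2 ≤ t * ((d : ℝ) + 1) - 1 := by nlinarith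
    rw [hx, mul_div_assoc', lt_div_iff₀ (by positivity)]
    calc 1 * ((d : ℝ) + 2) < (d + 1) * 2 := by linarith
      _ ≤ (d + 1) * d / 2 * (t * (d + 1) - 1) := by gcongr
  have hx0 : 0 < x := pos_of_mul_pos_right (one_pos.trans hquad) (by positivity)
  have hbernoulli := one_add_mul_add_mul_sq_le_pow hx0.le (d + 1)
  push_cast at hbernoulli
  calc ((d : ℝ) + 2) ^ (d + 1) * (t * (d + 1))
      < (d + 2) ^ (d + 1) * (1 + x) ^ (d + 1) := by
        gcongr
        nlinarith [mul_lt_mul_of_pos_right hquad hx0]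
    _ = ((d + 1) * (t + 1)) ^ (d + 1) := by
        rw [← mul_pow, mul_add, mul_comm _ x, hxt]
        ring

lemma tsylv_succ_eq_two {g j : ℕ} (hg : 1 ≤ g) (h : tsylv g (j + 1) = 2) :
    j = 0 ∧ g = 2 ∨ j = 1 ∧ g = 1 := by
  have := add_le_tsylv_succ hg j
  have : ¬(j = 0 ∧ g = 1) := by
    rintro ⟨rfl, rfl⟩
    simp [tsylv_one] at h
  omega

lemma nine_mul_pow_three_le {t : ℕ} (ht : 2 ≤ t) :
    9 * t ^ 3 ≤ 2 * (t * (t + 1)) ^ 2 ∧ (9 * t ^ 3 = 2 * (t * (t + 1)) ^ 2 → t = 2) := by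
  obtain ⟨s, rfl⟩ := Nat.exists_eq_add_of_le ht
  have hgap : 2 * ((2 + s) * (2 + s + 1)) ^ 2 =
      9 * (2 + s) ^ 3 + (2 + s) ^ 2 * ((2 * s + 3) * s) := by ring
  rw [hgap]
  refine ⟨Nat.le_add_right .., fun h => ?_⟩
  have h0 : (2 + s) ^ 2 * ((2 * s + 3) * s) = 0 := by omega
  simpa using h0

lemma pow_mul_tsylv_pow_le {g j e : ℕ} (hg : 1 ≤ g) (h : ¬(j + e = 1 ∧ g = 1)) :
    (e + 2) ^ (e + 1) * tsylv g (j + 1) ^ (e + 2) ≤ 2 * tsylv g (j + e + 1) ^ 2 ∧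
      ((e + 2) ^ (e + 1) * tsylv g (j + 1) ^ (e + 2) = 2 * tsylv g (j + e + 1) ^ 2 →
        e = 0 ∨ e = 1 ∧ tsylv g (j + 1) = 2) := by
  induction e generalizing j with
  | zero => simp
  | succ e ih =>
    have ht := tsylv_succ_pos hg j
    rcases e with _ | e
    · obtain ⟨hle, heq⟩ := nine_mul_pow_three_le (t := tsylv g (j + 1)) (by
        have := add_le_tsylv_succ hg j
        omega)
      rw [← sylv_succ, ← tsylv_succ_succ] at hle heq
      exact ⟨hle, fun h => Or.inr ⟨rfl, heq h⟩⟩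
    · have hstep : (e + 4) ^ (e + 3) * tsylv g (j + 1) ^ (e + 4) <
          (e + 3) ^ (e + 2) * tsylv g (j + 2) ^ (e + 3) := by
        calc (e + 4) ^ (e + 3) * tsylv g (j + 1) ^ (e + 4)
            = (e + 2 + 2) ^ (e + 2 + 1) * tsylv g (j + 1) * tsylv g (j + 1) ^ (e + 3) := by ring
          _ < (e + 2 + 1) ^ (e + 2) * (tsylv g (j + 1) + 1) ^ (e + 2 + 1) *
              tsylv g (j + 1) ^ (e + 3) :=
            Nat.mul_lt_mul_of_pos_right (add_two_pow_mul_lt (by omega) ht) (by positivity)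
          _ = (e + 3) ^ (e + 2) * tsylv g (j + 2) ^ (e + 3) := by
            rw [tsylv_succ_succ, sylv_succ, mul_pow]
            ring
      have hlt := hstep.trans_le (ih (j := j + 1) (by omega)).1
      rw [add_right_comm j 1, add_assoc j] at hlt
      exact ⟨hlt.le, fun h => absurd h hlt.ne⟩

/-- The invariant `F_{n-1}(A) = (α₁⋯αₙ) / lcm(α₁, …, αₙ)` of a tuple `A` of length `n`. -/
def prodDivLcm {ι : Type*} [Fintype ι] (A : ι → ℕ) : ℚ :=
  ((∏ i, A i : ℕ) : ℚ) / ((univ.lcm A : ℕ) : ℚ)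

lemma prodDivLcm_le_prod_castSucc {N : ℕ} {A : Fin (N + 1) → ℕ} (hA : ∀ i, 0 < A i) :
    prodDivLcm A ≤ (∏ i : Fin N, A i.castSucc : ℕ) := by
  have hlcm : 0 < univ.lcm A := Nat.pos_of_ne_zero (lcm_ne_zero_iff.mpr fun i _ => (hA i).ne')
  have hlast : A (Fin.last N) ≤ univ.lcm A := Nat.le_of_dvd hlcm (dvd_lcm (mem_univ _))
  rw [prodDivLcm, Fin.prod_univ_castSucc, div_le_iff₀ (by exact_mod_cast hlcm)]
  exact_mod_cast Nat.mul_le_mul_left _ hlast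

lemma prodDivLcm_eq_prod_castSucc {N : ℕ} {A : Fin (N + 1) → ℕ} (hlast : 0 < A (Fin.last N))
    (hA : ∀ i, A i ∣ A (Fin.last N)) : prodDivLcm A = (∏ i : Fin N, A i.castSucc : ℕ) := by
  have hlcm : univ.lcm A = A (Fin.last N) :=
    dvd_antisymm (lcm_dvd fun i _ => hA i) (dvd_lcm (mem_univ _))
  rw [prodDivLcm, hlcm, Fin.prod_univ_castSucc, Nat.cast_mul]
  exact mul_div_cancel_right₀ _ (by exact_mod_cast hlast.ne')

lemma mul_prodDivLcm_of_eq_sylvTuple {g j e : ℕ} (hg : 1 ≤ g) {A : Fin (j + e + 2) → ℕ}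
    (hA : ∀ i, A i = sylvTuple g j (e + 2) i) :
    g * prodDivLcm A = ((e + 2) ^ (e + 1) * tsylv g (j + 1) ^ (e + 2) : ℕ) := by
  have hlast : A (Fin.last (j + e + 1)) = (e + 2) * tsylv g (j + 1) := by
    rw [hA]
    exact if_neg (by simp; omega)
  rw [prodDivLcm_eq_prod_castSucc, ← mul_prod_sylvTuple, ← add_assoc,
    prod_range (sylvTuple g j (e + 2))]
  · simp only [hA, Fin.val_castSucc, Nat.cast_mul]
  · rw [hlast]
    exact Nat.mul_pos (by omega) (tsylv_succ_pos hg j)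
  · intro i
    rw [hlast, hA]
    exact sylvTuple_dvd ..

lemma IsUFP.exists_mul_prodDivLcm_le {g k : ℕ} (hg : 1 ≤ g) {A : Fin (k + 2) → ℕ}
    (hA : IsUFP g A) (hmono : Monotone A) :
    ∃ j e, j + e = k ∧
      g * prodDivLcm A ≤ ((e + 2) ^ (e + 1) * tsylv g (j + 1) ^ (e + 2) : ℕ) ∧
      (g * prodDivLcm A = ((e + 2) ^ (e + 1) * tsylv g (j + 1) ^ (e + 2) : ℕ) →
        ∀ i, A i = sylvTuple g j (e + 2) i) := by
  set a : ℕ → ℕ := fun i => A (Fin.clamp i (k + 1))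
  have ha_val (i : Fin (k + 2)) : a i = A i := congrArg A (Fin.ext (by simp; omega))
  have hsum : ∑ i ∈ range (k + 2), (a i : ℝ)⁻¹ = (g : ℝ)⁻¹ := by
    have h := congrArg (Rat.cast : ℚ → ℝ) hA.2
    simp only [sum_range, ha_val]
    push_cast at h
    simpa only [one_div] using h.symm
  have hprod : ∏ i ∈ range (k + 1), a i = ∏ i : Fin (k + 1), A i.castSucc := by
    rw [prod_range]
    exact prod_congr rfl fun i _ => ha_val i.castSucc
  obtain ⟨j, e, hje, hle, heq⟩ := exists_mul_prod_le hg (fun i => hA.1 _)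
    (hmono.comp Fin.clamp_monotone) hsum
  rw [hprod] at hle heq
  have hle' : (g : ℚ) * prodDivLcm A ≤ (g * ∏ i : Fin (k + 1), A i.castSucc : ℕ) := by
    rw [Nat.cast_mul]
    gcongr
    exact prodDivLcm_le_prod_castSucc hA.1
  refine ⟨j, e, hje, hle'.trans (by exact_mod_cast hle), fun h i => ?_⟩
  rw [← ha_val]
  exact heq (hle.antisymm (by exact_mod_cast h.symm.trans_le hle')) i i.isLt

lemma IsUFP.prodDivLcm_three {A : Fin 3 → ℕ} (hA : IsUFP 1 A) (hmono : Monotone A) :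
    prodDivLcm A ≤ 9 ∧ (prodDivLcm A = 9 ↔ ∀ i, A i = 3) := by
  have hiff : (∀ i, A i = 3) ↔ ∀ i, A i = sylvTuple 1 0 3 i := by simp [sylvTuple, tsylv_one]
  rw [hiff]
  have hconv := mul_prodDivLcm_of_eq_sylvTuple (g := 1) (j := 0) (e := 1) le_rfl (A := A)
  obtain ⟨j, e, hje, hle, heq⟩ := hA.exists_mul_prodDivLcm_le le_rfl hmono
  rcases j with _ | j
  · obtain rfl : e = 1 := by omega
    norm_num [tsylv_one] at hle heq hconv
    exact ⟨hle, heq, hconv⟩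
  · obtain ⟨rfl, rfl⟩ : j = 0 ∧ e = 0 := by omega
    norm_num [tsylv, sylv] at hle
    norm_num [tsylv_one] at hconv
    exact ⟨by linarith, fun h => by linarith, hconv⟩

lemma sylvTuple_two_zero_three (i : ℕ) : sylvTuple 2 0 3 i = 6 := by
  simp [sylvTuple, tsylv_one]

lemma sylvTuple_one_one_three (i : ℕ) : sylvTuple 1 1 3 i = if i = 0 then 2 else 6 := by
  rcases i with _ | i <;> simp [sylvTuple, tsylv, sylv]

lemma IsUFP.eq_of_inv_sum_eq {n g m : ℕ} {A : Fin n → ℕ} (hA : IsUFP g A)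
    (h : ∑ i, (1 : ℚ) / (A i : ℚ) = 1 / m) : g = m := by
  have hgm := hA.2.trans h
  rw [one_div, one_div, inv_inj] at hgm
  exact_mod_cast hgm

lemma IsUFP.mul_prodDivLcm_le {g k : ℕ} (hg : 1 ≤ g) (hkg : ¬(k = 1 ∧ g = 1))
    {A : Fin (k + 2) → ℕ} (hA : IsUFP g A) (hmono : Monotone A) :
    g * prodDivLcm A ≤ (2 * tsylv g (k + 1) ^ 2 : ℕ) ∧
      (g * prodDivLcm A = (2 * tsylv g (k + 1) ^ 2 : ℕ) ↔
        (k = 1 ∧ ∀ i, A i = 6) ∨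
        (k = 2 ∧ ∀ i, A i = if i.val = 0 then 2 else 6) ∨
        ∀ i, A i = sylvTuple g k 2 i) := by
  obtain ⟨j, e, rfl, hle, heq⟩ := hA.exists_mul_prodDivLcm_le hg hmono
  obtain ⟨hnum, hnum_eq⟩ := pow_mul_tsylv_pow_le hg hkg
  refine ⟨hle.trans (by exact_mod_cast hnum), fun h => ?_, ?_⟩
  · have hval := hnum.antisymm (by exact_mod_cast h.symm.trans_le hle)
    have htuple := heq (by rw [h, hval])
    rcases hnum_eq hval with rfl | ⟨rfl, ht⟩
    · exact Or.inr (Or.inr htuple)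
    · rcases tsylv_succ_eq_two hg ht with ⟨rfl, rfl⟩ | ⟨rfl, rfl⟩
      · exact Or.inl ⟨rfl, fun i => (htuple i).trans (sylvTuple_two_zero_three i)⟩
      · exact Or.inr (Or.inl ⟨rfl, fun i => (htuple i).trans (sylvTuple_one_one_three i)⟩)
  · generalize j + e = k at A hkg
    rintro (⟨rfl, h⟩ | ⟨rfl, h⟩ | h)
    · obtain rfl : g = 2 := hA.eq_of_inv_sum_eq (by norm_num [h])
      rw [mul_prodDivLcm_of_eq_sylvTuple (j := 0) (e := 1) hg fun i =>
        (h i).trans (sylvTuple_two_zero_three i).symm]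
      decide
    · obtain rfl : g = 1 := hA.eq_of_inv_sum_eq (by norm_num [h, Fin.sum_univ_succ])
      rw [mul_prodDivLcm_of_eq_sylvTuple (j := 1) (e := 1) hg fun i =>
        (h i).trans (sylvTuple_one_one_three i).symm]
      decide
    · simpa using mul_prodDivLcm_of_eq_sylvTuple (j := k) (e := 0) hg h

/-- Let `A = (α₁,…,αₙ)` be a unit fraction partition of `g ≥ 1`
with `n ≥ 3` and `α₁ ≤ ⋯ ≤ αₙ`, and set `F_{n-1}(A) = (α₁⋯αₙ)/lcm(α₁,…,αₙ)`.
If `(n,g) = (3,1)` then `F_{n-1}(A) ≤ 9` with equality iff `A = (3,3,3)`; otherwise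
`F_{n-1}(A) ≤ 2·t_{g,n-1}²/g`, with equality iff `A` is one of `(6,6,6)`,
`(2,6,6,6)`, `(s_{g,1},…,s_{g,n-2},2t_{g,n-1},2t_{g,n-1})`. -/
theorem ufp_Fnm1_bound
    (g n : ℕ) (hg : 1 ≤ g) (hn : 3 ≤ n)
    (A : Fin n → ℕ) (hA : IsUFP g A) (hmono : Monotone A) :
    (n = 3 ∧ g = 1 →
      ((∏ i, A i : ℕ) : ℚ) / ((Finset.univ.lcm A : ℕ) : ℚ) ≤ 9 ∧
        (((∏ i, A i : ℕ) : ℚ) / ((Finset.univ.lcm A : ℕ) : ℚ) = 9 ↔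
          ∀ i, A i = 3)) ∧
    (¬(n = 3 ∧ g = 1) →
      ((∏ i, A i : ℕ) : ℚ) / ((Finset.univ.lcm A : ℕ) : ℚ) ≤
          2 * (tsylv g (n - 1) : ℚ) ^ 2 / (g : ℚ) ∧
        (((∏ i, A i : ℕ) : ℚ) / ((Finset.univ.lcm A : ℕ) : ℚ) =
            2 * (tsylv g (n - 1) : ℚ) ^ 2 / (g : ℚ) ↔
          (n = 3 ∧ ∀ i, A i = 6) ∨
          (n = 4 ∧ ∀ i : Fin n, A i = if i.val = 0 then 2 else 6) ∨
          (∀ i : Fin n, A i =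
            if i.val + 1 ≤ n - 2 then sylv g (i.val + 1) else 2 * tsylv g (n - 1)))) := by
  obtain ⟨k, rfl⟩ : ∃ k, n = k + 2 := ⟨n - 2, by omega⟩
  refine ⟨?_, fun h => ?_⟩
  · rintro ⟨hk, rfl⟩
    obtain rfl : k = 1 := by omega
    exact hA.prodDivLcm_three hmono
  · have hg' : (0 : ℚ) < g := by exact_mod_cast hg
    obtain ⟨hle, heq⟩ := hA.mul_prodDivLcm_le hg (by omega) hmono
    push_cast at hle heq
    rw [le_div_iff₀' hg', eq_div_iff hg'.ne', mul_comm _ (g : ℚ)]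
    refine ⟨hle, heq.trans ?_⟩
    simp only [sylvTuple, Nat.reduceEqDiff, Nat.add_sub_cancel, Nat.add_one_le_iff]
    rfl
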